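/- (Minimax justification of least squares.) Let (x_1,y_1),…,(x_n,y_n) ∈ ℝ^d × ℝ be given samples with empirical marginal P̂_X on {x_1,…,x_n}, and define Γ := { P_{X,Y} : P_X = P̂_X, E_P[YX] = (1/n)Σ_{i=1}^n y_i x_i, E_P[Y²] = (1/n)Σ_{i=1}^n y_i² }. Then the minimax problem min_{ψ: ℝ^d → ℝ} max_{P ∈ Γ} E_P[ (Y − ψ(X))² ] is solved by a linear rule ψ*(x) = β*ᵀx, where β* is a solution of the least-squares problem min_β (1/n) Σ_{i=1}^n ( y_i − βᵀx_i )². -/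

import Mathlib

/-!
Let `Q` be a law with square-integrable response and features, such as the empirical law of the
samples, and let `Γ` be the laws sharing its `X`-marginal, its cross-moments `E[Y X]` and its
`E[Y²]`. Expanding the square, the risk of a linear rule depends on these quantities only, so a
linear rule has the same risk under every `P ∈ Γ` as under `Q`.

Conversely let `m` be the linear rule given by the normal equations. Besides `Q` itself, `Γ`
contains the reflected law `Q'`, the law of `(X, 2 m(X) - Y)` under `Q`: the residual `Y - m(X)` is
orthogonal to every linear rule, so changing its sign preserves the prescribed moments. By the
parallelogram identity applied to `m(X) - ψ(X)` and `Y - m(X)`, the risks of any rule `ψ` under `Q`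
and `Q'` average to at least the risk of `m` under `Q`, so one of the two laws is at least as bad
for `ψ` as every law of `Γ` is for `m`.
-/

open MeasureTheory
open scoped ENNReal

/-- The distribution set `Γ` for the least-squares minimax problem: all joint laws `P` of
`(X,Y) ∈ ℝ^d × ℝ` whose `X`-marginal is the empirical marginal of the samples and whose
cross-moments `E[YX]` and second moment `E[Y²]` match the empirical values. -/
def GammaLS (d n : ℕ) (xs : Fin n → Fin d → ℝ) (ys : Fin n → ℝ) :
    Set (Measure ((Fin d → ℝ) × ℝ)) :=
  {P | IsProbabilityMeasure P ∧
    P.fst = (n : ℝ≥0∞)⁻¹ • ∑ i, Measure.dirac (xs i) ∧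
    Integrable (fun p => p.2 ^ 2) P ∧
    (∀ j, Integrable (fun p => p.2 * p.1 j) P) ∧
    (∀ j, (∫ p, p.2 * p.1 j ∂P) = (n : ℝ)⁻¹ * ∑ i, ys i * xs i j) ∧
    (∫ p, p.2 ^ 2 ∂P) = (n : ℝ)⁻¹ * ∑ i, ys i ^ 2}

open scoped RealInnerProductSpace

section RealSupremum

variable {α : Type*} {s : Set α} {f : α → ℝ}

lemma le_biSup_of_bddAbove_image (hf : BddAbove (f '' s)) {a : α} (ha : a ∈ s) :
    f a ≤ ⨆ x ∈ s, f x := by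
  obtain ⟨b, hb⟩ := hf
  have hbdd : BddAbove (Set.range fun x => ⨆ _ : x ∈ s, f x) := by
    -- In `ℝ` the inner supremum is `0` at points outside `s`, so `b` alone need not be a bound.
    refine ⟨max b 0, ?_⟩
    rintro _ ⟨x, rfl⟩
    exact Real.iSup_le (fun hx => (hb ⟨x, hx, rfl⟩).trans (le_max_left b 0)) (le_max_right b 0)
  exact le_ciSup_of_le hbdd a (ciSup_pos (f := fun _ : a ∈ s => f a) ha).ge

end RealSupremum

section SquareIntegrable

lemma exists_forall_inner_eq_sum_mul_inner {H ι : Type*} [NormedAddCommGroup H]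
    [InnerProductSpace ℝ H] [Fintype ι] (v : ι → H) (y : H) :
    ∃ β : ι → ℝ, ∀ j, ⟪y, v j⟫ = ∑ k, β k * ⟪v k, v j⟫ := by
  let V := Submodule.span ℝ (Set.range v)
  have : FiniteDimensional ℝ V := FiniteDimensional.span_of_finite ℝ (Set.finite_range v)
  obtain ⟨β, hβ⟩ := (Submodule.mem_span_range_iff_exists_fun ℝ).1 (V.starProjection_apply_mem y)
  refine ⟨β, fun j => ?_⟩
  have horth := V.starProjection_inner_eq_zero y (v j) (Submodule.subset_span ⟨j, rfl⟩)
  rw [inner_sub_left, sub_eq_zero, ← hβ, sum_inner] at horth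
  simpa only [real_inner_smul_left] using horth

variable {Ω ι : Type*} [MeasurableSpace Ω] [Fintype ι] {μ : Measure Ω} {f g : Ω → ℝ}

lemma inner_toLp_eq_integral_mul (hf : MemLp f 2 μ) (hg : MemLp g 2 μ) :
    ⟪hf.toLp f, hg.toLp g⟫ = ∫ ω, f ω * g ω ∂μ := by
  rw [L2.inner_def]
  refine integral_congr_ae ?_
  filter_upwards [hf.coeFn_toLp, hg.coeFn_toLp] with ω hfω hgω
  rw [hfω, hgω, Real.inner_apply]

lemma integrable_mul_of_memLp_two (hf : MemLp f 2 μ) (hg : MemLp g 2 μ) :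
    Integrable (fun ω => f ω * g ω) μ :=
  hf.integrable_mul hg

lemma integral_sub_sq (hf : MemLp f 2 μ) (hg : MemLp g 2 μ) :
    ∫ ω, (f ω - g ω) ^ 2 ∂μ
      = ∫ ω, f ω ^ 2 ∂μ - 2 * ∫ ω, f ω * g ω ∂μ + ∫ ω, g ω ^ 2 ∂μ := by
  have hfg := (integrable_mul_of_memLp_two hf hg).const_mul 2
  have hsub : Integrable (fun ω => f ω ^ 2 - 2 * (f ω * g ω)) μ := hf.integrable_sq.sub hfg
  calc ∫ ω, (f ω - g ω) ^ 2 ∂μ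
      = ∫ ω, (f ω ^ 2 - 2 * (f ω * g ω) + g ω ^ 2) ∂μ := by congr 1; ext ω; ring
    _ = _ := by
      rw [integral_add hsub hg.integrable_sq, integral_sub hf.integrable_sq hfg,
        integral_const_mul]

lemma integral_mul_sum_mul {h : ι → Ω → ℝ} (hf : MemLp f 2 μ) (hh : ∀ j, MemLp (h j) 2 μ)
    (β : ι → ℝ) :
    ∫ ω, f ω * ∑ j, β j * h j ω ∂μ = ∑ j, β j * ∫ ω, f ω * h j ω ∂μ := by
  simp_rw [Finset.mul_sum, mul_left_comm (f _)]
  rw [integral_finsetSum _ fun j _ => (integrable_mul_of_memLp_two hf (hh j)).const_mul (β j)]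
  simp_rw [integral_const_mul]

lemma exists_forall_integral_sub_sum_mul_eq_zero {h : ι → Ω → ℝ} (hf : MemLp f 2 μ)
    (hh : ∀ j, MemLp (h j) 2 μ) :
    ∃ β : ι → ℝ, ∀ j, ∫ ω, (f ω - ∑ k, β k * h k ω) * h j ω ∂μ = 0 := by
  obtain ⟨β, hβ⟩ := exists_forall_inner_eq_sum_mul_inner (fun j => (hh j).toLp (h j)) (hf.toLp f)
  simp only [inner_toLp_eq_integral_mul] at hβ
  refine ⟨β, fun j => ?_⟩
  have hsum : MemLp (fun ω => ∑ k, β k * h k ω) 2 μ :=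
    memLp_finsetSum _ fun k _ => (hh k).const_mul (β k)
  simp_rw [sub_mul]
  rw [integral_sub (integrable_mul_of_memLp_two hf (hh j))
    (integrable_mul_of_memLp_two hsum (hh j)), hβ j, sub_eq_zero]
  simp_rw [mul_comm _ (h j _), integral_mul_sum_mul (hh j) hh]

end SquareIntegrable

section Marginal

variable {α β F : Type*} [MeasurableSpace α] [MeasurableSpace β] [NormedAddCommGroup F]
  {P : Measure (α × β)} {f : α → F}

lemma memLp_comp_fst {q : ℝ≥0∞} (hf : MemLp f q P.fst) : MemLp (fun p => f p.1) q P :=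
  hf.comp_measurePreserving ⟨measurable_fst, rfl⟩

lemma integral_comp_fst [NormedSpace ℝ F] (hf : AEStronglyMeasurable f P.fst) :
    ∫ p, f p.1 ∂P = ∫ x, f x ∂P.fst :=
  (integral_map measurable_fst.aemeasurable hf).symm

end Marginal

section Rules

variable {E ι : Type*}

/-- The linear combination of the features `φ` with coefficients `β`, as a prediction rule; the
coordinate features on `Fin d → ℝ` give `x ↦ βᵀx`. -/
def linearRule [Fintype ι] (φ : ι → E → ℝ) (β : ι → ℝ) (x : E) : ℝ :=
  ∑ j, β j * φ j x

lemma linearRule_sub [Fintype ι] (φ : ι → E → ℝ) (β β' : ι → ℝ) (x : E) :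
    linearRule φ (β - β') x = linearRule φ β x - linearRule φ β' x := by
  simp only [linearRule, Pi.sub_apply, sub_mul, Finset.sum_sub_distrib]

variable [MeasurableSpace E]

/-- The risk `E_P[(Y - ψ(X))²]` of the rule `ψ` when `(X, Y)` has law `P`. As a Bochner integral it
is `0` if `(Y - ψ(X))²` is not integrable. -/
noncomputable def sqRisk (P : Measure (E × ℝ)) (ψ : E → ℝ) : ℝ :=
  ∫ p, (p.2 - ψ p.1) ^ 2 ∂P

/-- The normal equations of least squares under the law `Q`: the residual of `linearRule φ β` is
orthogonal to every feature. -/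
def NormalEquations [Fintype ι] (Q : Measure (E × ℝ)) (φ : ι → E → ℝ) (β : ι → ℝ) : Prop :=
  ∀ j, ∫ p, (p.2 - linearRule φ β p.1) * φ j p.1 ∂Q = 0

/-- The laws with the same `X`-marginal, cross-moments `E[Y φ_j(X)]` and (finite) second moment
`E[Y²]` as the reference law `Q`. The set `Γ` of the least-squares problem is the case where `Q` is
the empirical law of the samples. Equality of the marginals already makes `P` a probability measure
when `Q` is one. -/
def momentClass (Q : Measure (E × ℝ)) (φ : ι → E → ℝ) : Set (Measure (E × ℝ)) :=
  {P | P.fst = Q.fst ∧ MemLp Prod.snd 2 P ∧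
    (∀ j, ∫ p, p.2 * φ j p.1 ∂P = ∫ p, p.2 * φ j p.1 ∂Q) ∧
    ∫ p, p.2 ^ 2 ∂P = ∫ p, p.2 ^ 2 ∂Q}

/-- The reflection of the response in the graph of `m`, which changes the sign of the residual
`y - m x`. -/
def reflectResponse (m : E → ℝ) (p : E × ℝ) : E × ℝ :=
  (p.1, 2 * m p.1 - p.2)

variable {P Q : Measure (E × ℝ)} {φ : ι → E → ℝ} {ψ m : E → ℝ} {β : ι → ℝ}

lemma memLp_residual {q : ℝ≥0∞} (hY : MemLp Prod.snd q P) (hψ : MemLp ψ q P.fst) :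
    MemLp (fun p => p.2 - ψ p.1) q P :=
  hY.sub (memLp_comp_fst hψ)

lemma sqRisk_nonneg (P : Measure (E × ℝ)) (ψ : E → ℝ) : 0 ≤ sqRisk P ψ :=
  integral_nonneg fun _ => sq_nonneg _

lemma sqRisk_eq_sub_add (hY : MemLp Prod.snd 2 P) (hψ : MemLp ψ 2 P.fst) :
    sqRisk P ψ = ∫ p, p.2 ^ 2 ∂P - 2 * ∫ p, p.2 * ψ p.1 ∂P + ∫ x, ψ x ^ 2 ∂P.fst := by
  rw [sqRisk, integral_sub_sq hY (memLp_comp_fst hψ),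
    integral_comp_fst (f := fun x => ψ x ^ 2) (hψ.1.pow 2)]

lemma self_mem_momentClass (hY : MemLp Prod.snd 2 Q) : Q ∈ momentClass Q φ :=
  ⟨rfl, hY, fun _ => rfl, rfl⟩

lemma sqRisk_le_of_mem_momentClass (hψ : MemLp ψ 2 Q.fst) (hP : P ∈ momentClass Q φ) :
    sqRisk P ψ ≤ 2 * ∫ p, p.2 ^ 2 ∂Q + 2 * ∫ x, ψ x ^ 2 ∂Q.fst := by
  obtain ⟨hfst, hY, -, hsq⟩ := hP
  rw [← hfst] at hψ
  have hψP := memLp_comp_fst hψ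
  rw [← hsq, ← hfst, ← integral_comp_fst (f := fun x => ψ x ^ 2) (hψ.1.pow 2),
    ← integral_const_mul, ← integral_const_mul,
    ← integral_add (hY.integrable_sq.const_mul 2) (hψP.integrable_sq.const_mul 2)]
  refine integral_mono (memLp_residual hY hψ).integrable_sq
    ((hY.integrable_sq.const_mul 2).add (hψP.integrable_sq.const_mul 2)) fun p => ?_
  change (p.2 - ψ p.1) ^ 2 ≤ 2 * p.2 ^ 2 + 2 * ψ p.1 ^ 2
  linarith [sq_nonneg (p.2 + ψ p.1), add_sq p.2 (ψ p.1), sub_sq p.2 (ψ p.1)]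

lemma bddAbove_sqRisk_image_momentClass (hψ : MemLp ψ 2 Q.fst) :
    BddAbove ((fun P => sqRisk P ψ) '' momentClass Q φ) :=
  ⟨_, Set.forall_mem_image.2 fun _ hP => sqRisk_le_of_mem_momentClass hψ hP⟩

lemma aemeasurable_reflectResponse (hm : AEStronglyMeasurable m Q.fst) :
    AEMeasurable (reflectResponse m) Q :=
  measurable_fst.aemeasurable.prodMk
    (((hm.aemeasurable.comp_measurable measurable_fst).const_mul 2).sub measurable_snd.aemeasurable)

lemma fst_map_reflectResponse (hm : AEStronglyMeasurable m Q.fst) :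
    (Q.map (reflectResponse m)).fst = Q.fst :=
  AEMeasurable.map_map_of_aemeasurable measurable_fst.aemeasurable (aemeasurable_reflectResponse hm)

lemma memLp_snd_map_reflectResponse {q : ℝ≥0∞} (hY : MemLp Prod.snd q Q)
    (hm : MemLp m q Q.fst) : MemLp Prod.snd q (Q.map (reflectResponse m)) :=
  (memLp_map_measure_iff measurable_snd.aestronglyMeasurable (aemeasurable_reflectResponse hm.1)).2
    (((memLp_comp_fst hm).const_mul 2).sub hY)

lemma integral_snd_mul_map_reflectResponse (hm : AEStronglyMeasurable m Q.fst)
    (hψ : AEStronglyMeasurable ψ Q.fst) :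
    ∫ p, p.2 * ψ p.1 ∂(Q.map (reflectResponse m)) = ∫ p, (2 * m p.1 - p.2) * ψ p.1 ∂Q := by
  rw [← fst_map_reflectResponse hm] at hψ
  exact integral_map (aemeasurable_reflectResponse hm)
    (measurable_snd.aestronglyMeasurable.mul (hψ.comp_measurable measurable_fst))

lemma sqRisk_map_reflectResponse (hm : AEStronglyMeasurable m Q.fst)
    (hψ : AEStronglyMeasurable ψ Q.fst) :
    sqRisk (Q.map (reflectResponse m)) ψ = ∫ p, (2 * m p.1 - p.2 - ψ p.1) ^ 2 ∂Q := by
  rw [← fst_map_reflectResponse hm] at hψ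
  exact integral_map (aemeasurable_reflectResponse hm)
    ((measurable_snd.aestronglyMeasurable.sub (hψ.comp_measurable measurable_fst)).pow 2)

lemma two_mul_sqRisk_le_add_sqRisk_map_reflectResponse (hY : MemLp Prod.snd 2 Q)
    (hm : MemLp m 2 Q.fst) (hψ : MemLp ψ 2 Q.fst) :
    2 * sqRisk Q m ≤ sqRisk Q ψ + sqRisk (Q.map (reflectResponse m)) ψ := by
  have hrisk := (memLp_residual hY hψ).integrable_sq
  have hreflected :=
    ((((memLp_comp_fst hm).const_mul 2).sub hY).sub (memLp_comp_fst hψ)).integrable_sq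
  rw [sqRisk_map_reflectResponse hm.1 hψ.1, sqRisk, sqRisk, ← integral_const_mul]
  refine (integral_mono ((memLp_residual hY hm).integrable_sq.const_mul 2) (hrisk.add hreflected)
    fun p => ?_).trans_eq (integral_add hrisk hreflected)
  have parallelogram : (p.2 - ψ p.1) ^ 2 + (2 * m p.1 - p.2 - ψ p.1) ^ 2
      = 2 * (p.2 - m p.1) ^ 2 + 2 * (m p.1 - ψ p.1) ^ 2 := by ring
  exact (le_add_of_nonneg_right (by positivity)).trans_eq parallelogram.symm

variable [Fintype ι]

lemma memLp_linearRule {ν : Measure E} {q : ℝ≥0∞} (hφ : ∀ j, MemLp (φ j) q ν) (β : ι → ℝ) :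
    MemLp (linearRule φ β) q ν :=
  memLp_finsetSum _ fun j _ => (hφ j).const_mul (β j)

lemma exists_normalEquations (hY : MemLp Prod.snd 2 Q) (hφ : ∀ j, MemLp (φ j) 2 Q.fst) :
    ∃ β, NormalEquations Q φ β :=
  exists_forall_integral_sub_sum_mul_eq_zero hY fun j => memLp_comp_fst (hφ j)

lemma NormalEquations.integral_residual_mul_linearRule (hY : MemLp Prod.snd 2 Q)
    (hφ : ∀ j, MemLp (φ j) 2 Q.fst) (hβ : NormalEquations Q φ β) (γ : ι → ℝ) :
    ∫ p, (p.2 - linearRule φ β p.1) * linearRule φ γ p.1 ∂Q = 0 := by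
  have hres := memLp_residual hY (memLp_linearRule hφ β)
  calc ∫ p, (p.2 - linearRule φ β p.1) * linearRule φ γ p.1 ∂Q
      = ∑ j, γ j * ∫ p, (p.2 - linearRule φ β p.1) * φ j p.1 ∂Q :=
        integral_mul_sum_mul hres (fun j => memLp_comp_fst (hφ j)) γ
    _ = 0 := Finset.sum_eq_zero fun j _ => by rw [hβ j, mul_zero]

lemma NormalEquations.sqRisk_linearRule_le (hY : MemLp Prod.snd 2 Q)
    (hφ : ∀ j, MemLp (φ j) 2 Q.fst) (hβ : NormalEquations Q φ β) (β' : ι → ℝ) :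
    sqRisk Q (linearRule φ β) ≤ sqRisk Q (linearRule φ β') := by
  have hres := memLp_residual hY (memLp_linearRule hφ β)
  have hdiff := memLp_comp_fst (memLp_linearRule hφ (β' - β))
  have pythagoras : sqRisk Q (linearRule φ β')
      = sqRisk Q (linearRule φ β) + ∫ p, linearRule φ (β' - β) p.1 ^ 2 ∂Q := by
    calc sqRisk Q (linearRule φ β')
        = ∫ p, (p.2 - linearRule φ β p.1 - linearRule φ (β' - β) p.1) ^ 2 ∂Q := by
          simp_rw [sqRisk, linearRule_sub, sub_sub_sub_cancel_right]
      _ = _ := by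
          rw [integral_sub_sq hres hdiff, hβ.integral_residual_mul_linearRule hY hφ, mul_zero,
            sub_zero, sqRisk]
  rw [pythagoras]
  exact le_add_of_nonneg_right (integral_nonneg fun _ => sq_nonneg _)

lemma sqRisk_linearRule_eq_of_mem_momentClass (hY : MemLp Prod.snd 2 Q)
    (hφ : ∀ j, MemLp (φ j) 2 Q.fst) (hP : P ∈ momentClass Q φ) (β : ι → ℝ) :
    sqRisk P (linearRule φ β) = sqRisk Q (linearRule φ β) := by
  obtain ⟨hfst, hYP, hcross, hsq⟩ := hP
  have hφP : ∀ j, MemLp (φ j) 2 P.fst := hfst ▸ hφ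
  have hcrossRule : ∫ p, p.2 * linearRule φ β p.1 ∂P = ∫ p, p.2 * linearRule φ β p.1 ∂Q := by
    simp_rw [linearRule]
    rw [integral_mul_sum_mul hYP fun j => memLp_comp_fst (hφP j),
      integral_mul_sum_mul hY fun j => memLp_comp_fst (hφ j)]
    simp_rw [hcross]
  rw [sqRisk_eq_sub_add hYP (memLp_linearRule hφP β),
    sqRisk_eq_sub_add hY (memLp_linearRule hφ β), hsq, hcrossRule, hfst]

lemma NormalEquations.map_reflectResponse_mem_momentClass (hY : MemLp Prod.snd 2 Q)
    (hφ : ∀ j, MemLp (φ j) 2 Q.fst) (hβ : NormalEquations Q φ β) :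
    Q.map (reflectResponse (linearRule φ β)) ∈ momentClass Q φ := by
  have hm := memLp_linearRule hφ β
  have hres := memLp_residual hY hm
  refine ⟨fst_map_reflectResponse hm.1, memLp_snd_map_reflectResponse hY hm, fun j => ?_, ?_⟩
  · have hφj := memLp_comp_fst (hφ j)
    calc ∫ p, p.2 * φ j p.1 ∂(Q.map (reflectResponse (linearRule φ β)))
        = ∫ p, (p.2 * φ j p.1 - 2 * ((p.2 - linearRule φ β p.1) * φ j p.1)) ∂Q := by
          rw [integral_snd_mul_map_reflectResponse hm.1 (hφ j).1]
          congr 1; ext p; ring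
      _ = ∫ p, p.2 * φ j p.1 ∂Q := by
          rw [integral_sub (integrable_mul_of_memLp_two hY hφj)
              ((integrable_mul_of_memLp_two hres hφj).const_mul 2),
            integral_const_mul, hβ j, mul_zero, sub_zero]
  · calc ∫ p, p.2 ^ 2 ∂(Q.map (reflectResponse (linearRule φ β)))
        = ∫ p, (2 * linearRule φ β p.1 - p.2) ^ 2 ∂Q :=
          integral_map (aemeasurable_reflectResponse hm.1)
            (measurable_snd.pow_const 2).aestronglyMeasurable
      _ = ∫ p, (p.2 ^ 2 - 4 * ((p.2 - linearRule φ β p.1) * linearRule φ β p.1)) ∂Q := by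
          congr 1; ext p; ring
      _ = ∫ p, p.2 ^ 2 ∂Q := by
          rw [integral_sub hY.integrable_sq
              ((integrable_mul_of_memLp_two hres (memLp_comp_fst hm)).const_mul 4),
            integral_const_mul, hβ.integral_residual_mul_linearRule hY hφ, mul_zero, sub_zero]

theorem minimax_least_squares_general (hY : MemLp Prod.snd 2 Q)
    (hφ : ∀ j, MemLp (φ j) 2 Q.fst) :
    ∃ β : ι → ℝ,
      (∀ β' : ι → ℝ, sqRisk Q (linearRule φ β) ≤ sqRisk Q (linearRule φ β')) ∧
      ∀ ψ : E → ℝ, MemLp ψ 2 Q.fst →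
        (⨆ P ∈ momentClass Q φ, sqRisk P (linearRule φ β))
          ≤ ⨆ P ∈ momentClass Q φ, sqRisk P ψ := by
  obtain ⟨β, hβ⟩ := exists_normalEquations hY hφ
  refine ⟨β, hβ.sqRisk_linearRule_le hY hφ, fun ψ hψ => ?_⟩
  have hupper : ⨆ P ∈ momentClass Q φ, sqRisk P (linearRule φ β) ≤ sqRisk Q (linearRule φ β) :=
    Real.iSup_le (fun P => Real.iSup_le
      (fun hP => (sqRisk_linearRule_eq_of_mem_momentClass hY hφ hP β).le) (sqRisk_nonneg _ _))
      (sqRisk_nonneg _ _)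
  have hbdd := bddAbove_sqRisk_image_momentClass (φ := φ) hψ
  have hself := le_biSup_of_bddAbove_image hbdd (self_mem_momentClass hY)
  have hreflected :=
    le_biSup_of_bddAbove_image hbdd (hβ.map_reflectResponse_mem_momentClass hY hφ)
  have haverage :=
    two_mul_sqRisk_le_add_sqRisk_map_reflectResponse hY (memLp_linearRule hφ β) hψ
  linarith

end Rules

section EmpiricalMeasure

variable {α α' κ F : Type*} [MeasurableSpace α] [MeasurableSpace α'] [Fintype κ]
  [NormedAddCommGroup F]

/-- The empirical measure of the sample `x`, giving mass `1 / |κ|` to each `x i`; it is `0` for an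
empty sample. -/
noncomputable def empiricalMeasure (x : κ → α) : Measure α :=
  (Fintype.card κ : ℝ≥0∞)⁻¹ • ∑ i, Measure.dirac (x i)

instance [Nonempty κ] (x : κ → α) : IsProbabilityMeasure (empiricalMeasure x) :=
  ⟨by simp [empiricalMeasure, ENNReal.inv_mul_cancel]⟩

lemma map_empiricalMeasure (x : κ → α) {f : α → α'} (hf : Measurable f) :
    (empiricalMeasure x).map f = empiricalMeasure (f ∘ x) := by
  rw [empiricalMeasure, Measure.map_smul, Measure.map_finset_sum hf.aemeasurable]
  simp only [Measure.map_dirac' hf, empiricalMeasure, Function.comp_apply]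

lemma fst_empiricalMeasure (z : κ → α × α') :
    (empiricalMeasure z).fst = empiricalMeasure fun i => (z i).1 :=
  map_empiricalMeasure z measurable_fst

variable [MeasurableSingletonClass α]

lemma integral_empiricalMeasure [NormedSpace ℝ F] [CompleteSpace F] (x : κ → α) (f : α → F) :
    ∫ a, f a ∂(empiricalMeasure x) = (Fintype.card κ : ℝ)⁻¹ • ∑ i, f (x i) := by
  rw [empiricalMeasure, integral_smul_measure,
    integral_finsetSum_measure fun i _ => integrable_dirac enorm_lt_top]
  simp only [integral_dirac, ENNReal.toReal_inv, ENNReal.toReal_natCast]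

lemma memLp_empiricalMeasure [Nonempty κ] (x : κ → α) (f : α → F) (q : ℝ≥0∞) :
    MemLp f q (empiricalMeasure x) := by
  have hmeas : AEStronglyMeasurable f (empiricalMeasure x) :=
    (integrable_finsetSum_measure.2 fun i _ =>
      integrable_dirac enorm_lt_top).aestronglyMeasurable.smul_measure _
  refine MemLp.of_bound hmeas (∑ i, ‖f (x i)‖) (Measure.ae_smul_measure ?_ _)
  rw [ae_finsetSum_measure_iff]
  intro i _
  rw [ae_dirac_eq, Filter.eventually_pure]
  exact Finset.single_le_sum (fun k _ => norm_nonneg (f (x k))) (Finset.mem_univ i)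

lemma memLp_fst_empiricalMeasure [Nonempty κ] (z : κ → α × α') (f : α → F) (q : ℝ≥0∞) :
    MemLp f q (empiricalMeasure z).fst :=
  fst_empiricalMeasure z ▸ memLp_empiricalMeasure _ f q

end EmpiricalMeasure

lemma GammaLS_eq_momentClass {d n : ℕ} [NeZero n] (xs : Fin n → Fin d → ℝ) (ys : Fin n → ℝ) :
    GammaLS d n xs ys
      = momentClass (empiricalMeasure fun i => (xs i, ys i)) fun j x => x j := by
  ext P
  have hsnd : MemLp Prod.snd 2 P ↔ Integrable (fun p => p.2 ^ 2) P :=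
    memLp_two_iff_integrable_sq measurable_snd.aestronglyMeasurable
  have hxs : empiricalMeasure xs = (n : ℝ≥0∞)⁻¹ • ∑ i, Measure.dirac (xs i) := by
    rw [empiricalMeasure, Fintype.card_fin]
  simp only [GammaLS, momentClass, Set.mem_ofPred_eq, fst_empiricalMeasure, hxs, hsnd,
    integral_empiricalMeasure, Fintype.card_fin, smul_eq_mul]
  refine ⟨fun ⟨_, hfst, hint, _, hcross, hsq⟩ => ⟨hfst, hint, hcross, hsq⟩,
    fun ⟨hfst, hint, hcross, hsq⟩ => ⟨⟨?_⟩, hfst, hint, fun j => ?_, hcross, hsq⟩⟩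
  · rw [← Measure.fst_univ, hfst, ← hxs, measure_univ]
  · have hcoord : MemLp (fun x : Fin d → ℝ => x j) 2 P.fst := by
      rw [hfst, ← hxs]
      exact memLp_empiricalMeasure xs _ 2
    exact integrable_mul_of_memLp_two (hsnd.2 hint) (memLp_comp_fst hcoord)

/-- **Minimax justification of least squares.**
Given samples `(x_i, y_i) ∈ ℝ^d × ℝ`, the minimax problem
`min_{ψ : ℝ^d → ℝ} max_{P ∈ Γ} E_P[(Y − ψ(X))²]` over the set `Γ = GammaLS` is solved by a
linear rule `ψ*(x) = β*ᵀx`, where `β*` solves the least-squares problem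
`min_β (1/n) ∑_i (y_i − βᵀx_i)²`. -/
theorem minimax_least_squares (d n : ℕ) (hn : 0 < n)
    (xs : Fin n → Fin d → ℝ) (ys : Fin n → ℝ) :
    ∃ β : Fin d → ℝ,
      (∀ β' : Fin d → ℝ,
        (n : ℝ)⁻¹ * ∑ i, (ys i - ∑ j, β j * xs i j) ^ 2
          ≤ (n : ℝ)⁻¹ * ∑ i, (ys i - ∑ j, β' j * xs i j) ^ 2) ∧
      ∀ ψ : (Fin d → ℝ) → ℝ, Measurable ψ →
        (⨆ P ∈ GammaLS d n xs ys, ∫ p, (p.2 - ∑ j, β j * p.1 j) ^ 2 ∂P)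
          ≤ ⨆ P ∈ GammaLS d n xs ys, ∫ p, (p.2 - ψ p.1) ^ 2 ∂P := by
  have : NeZero n := ⟨hn.ne'⟩
  obtain ⟨β, hβ_least, hβ_minimax⟩ := minimax_least_squares_general
    (memLp_empiricalMeasure (fun i => (xs i, ys i)) Prod.snd 2)
    fun j => memLp_fst_empiricalMeasure _ (fun x => x j) 2
  simp only [sqRisk, integral_empiricalMeasure, Fintype.card_fin, smul_eq_mul] at hβ_least
  rw [GammaLS_eq_momentClass]
  exact ⟨β, hβ_least, fun ψ _ => hβ_minimax ψ (memLp_fst_empiricalMeasure _ ψ 2)⟩
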